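/- arXiv:2103.06844 — 2 statements merged into one kernel-verified Lean document; each statement's English description precedes it below -/
import Mathlib

section
/- For every real number b > 0, the sequence N ↦ (b/N)² · ( ∑_{n=1}^{N+1} n·(1 − b/N)^{n−1} + ∑_{n=1}^{N} n·(1 − b/N)^{2N+1−n} ) tends to (1 − e^{−b})² as N → ∞. -/
open Filter Finset

lemma aux_left (x : ℝ) (M : ℕ) :
    (1 - x) ^ 2 * ∑ n ∈ Finset.Icc 1 M, (n : ℝ) * x ^ (n - 1)
      = 1 - (M + 1) * x ^ M + M * x ^ (M + 1) := by
  induction M with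
  | zero => simp
  | succ M ih =>
    rw [Finset.sum_Icc_succ_top (by omega), mul_add, ih, Nat.add_sub_cancel]
    push_cast
    ring

lemma aux_right (x : ℝ) (j M : ℕ) :
    (1 - x) ^ 2 * ∑ n ∈ Finset.Icc 1 M, (n : ℝ) * x ^ (M + j - n)
      = x ^ j * (x ^ (M + 1) - (M + 1) * x + M) := by
  induction M with
  | zero => simp
  | succ M ih =>
    have h : ∑ n ∈ Finset.Icc 1 M, (n : ℝ) * x ^ (M + 1 + j - n)
        = x * ∑ n ∈ Finset.Icc 1 M, (n : ℝ) * x ^ (M + j - n) := by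
      rw [Finset.mul_sum]
      refine Finset.sum_congr rfl fun n hn => ?_
      have := (Finset.mem_Icc.1 hn).2
      rw [show M + 1 + j - n = (M + j - n) + 1 by omega]
      ring
    rw [Finset.sum_Icc_succ_top (by omega), h, mul_add, mul_left_comm, ih,
      Nat.add_sub_cancel_left]
    push_cast
    ring

theorem geom_sq_riemann_exp (b : ℝ) (hb : 0 < b) :
    Tendsto (fun N : ℕ =>
        (b / N) ^ 2 *
          ((∑ n ∈ Finset.Icc 1 (N + 1), (n : ℝ) * (1 - b / N) ^ (n - 1)) +
            ∑ n ∈ Finset.Icc 1 N, (n : ℝ) * (1 - b / N) ^ (2 * N + 1 - n)))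
      atTop (nhds ((1 - Real.exp (-b)) ^ 2)) := by
  have key : ∀ N : ℕ, (b / N) ^ 2 *
          ((∑ n ∈ Finset.Icc 1 (N + 1), (n : ℝ) * (1 - b / N) ^ (n - 1)) +
            ∑ n ∈ Finset.Icc 1 N, (n : ℝ) * (1 - b / N) ^ (2 * N + 1 - n))
      = (1 - (1 + (-b) / N) ^ N * (1 - b / N)) ^ 2 := by
    intro N
    have h1 := aux_left (1 - b / N) (N + 1)
    have h2 := aux_right (1 - b / N) (N + 1) N
    rw [show N + (N + 1) = 2 * N + 1 by ring] at h2
    rw [show (1 : ℝ) + (-b) / N = 1 - b / N by ring]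
    rw [sub_sub_cancel] at h1 h2
    rw [mul_add, h1, h2]
    push_cast
    ring
  simp_rw [key]
  have h1 := Real.tendsto_one_add_div_pow_exp (-b)
  have h2 : Tendsto (fun N : ℕ => 1 - b / (N : ℝ)) atTop (nhds 1) := by
    simpa using (tendsto_const_div_atTop_nhds_zero_nat b).const_sub 1
  simpa using ((h1.mul h2).const_sub 1).pow 2
end

section
/- The central binomial coefficient obeys the Stirling asymptotic: the sequence m ↦ C(2m, m) · √(π·m) / 4^m of real numbers converges to 1 as m → ∞. -/
open Filter

theorem central_binom_stirling :
    Tendsto (fun m : ℕ =>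
        (Nat.choose (2 * m) m : ℝ) * Real.sqrt (Real.pi * m) / 4 ^ m)
      atTop (nhds 1) := by
  have hs := Stirling.tendsto_stirlingSeq_sqrt_pi
  have hp : 0 < Real.sqrt Real.pi := Real.sqrt_pos.mpr Real.pi_pos
  have h2 : Tendsto (fun m : ℕ => 2 * m) atTop atTop :=
    tendsto_id.const_mul_atTop' (by norm_num)
  have h3 := ((hs.comp h2).div (hs.pow 2) (by positivity)).mul_const (Real.sqrt Real.pi)
  have h4 : Real.sqrt Real.pi / Real.sqrt Real.pi ^ 2 * Real.sqrt Real.pi = 1 := by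
    field_simp
  rw [h4] at h3
  refine h3.congr' ?_
  filter_upwards [eventually_gt_atTop 0] with m hm
  have hm' : (0 : ℝ) < m := by exact_mod_cast hm
  have hc : (Nat.choose (2 * m) m : ℝ) = (Nat.factorial (2 * m) : ℝ) / (Nat.factorial m : ℝ) ^ 2 := by
    rw [Nat.cast_choose ℝ (by omega : m ≤ 2 * m), show 2 * m - m = m by omega, sq]
  have hf : (0 : ℝ) < Nat.factorial m := by exact_mod_cast Nat.factorial_pos m
  have e1 : Real.sqrt (2 * ((2 * m : ℕ) : ℝ)) = 2 * Real.sqrt m := by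
    rw [show (2 * ((2 * m : ℕ) : ℝ)) = 2 ^ 2 * m by push_cast; ring,
      Real.sqrt_mul (by norm_num), Real.sqrt_sq (by norm_num)]
  have e2 : Real.sqrt (2 * (m : ℝ)) ^ 2 = 2 * Real.sqrt m ^ 2 := by
    rw [Real.sq_sqrt (by positivity), Real.sq_sqrt hm'.le]
  have e3 : (((2 * m : ℕ) : ℝ) / Real.exp 1) ^ (2 * m) = 4 ^ m * (((m : ℝ) / Real.exp 1) ^ m) ^ 2 := by
    rw [← pow_mul, mul_comm m 2, show (4 : ℝ) = 2 ^ 2 by norm_num, ← pow_mul, ← mul_pow]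
    push_cast
    ring
  have hq : 0 < Real.sqrt m := Real.sqrt_pos.mpr hm'
  have hE : 0 < ((m : ℝ) / Real.exp 1) ^ m := by positivity
  simp only [Pi.div_apply, Function.comp, Stirling.stirlingSeq]
  rw [e1, e3, hc, Real.sqrt_mul Real.pi_pos.le]
  generalize ((m : ℝ) / Real.exp 1) ^ m = E at *
  rw [div_pow, mul_pow, e2]
  field_simp
end
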